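/- Let Γ = (V, E) be a finite connected simple graph with |V| = r+1 ≥ 3 vertices and |E| = n ≥ 3 edges. Assume that for every spanning tree T of Γ, the Kirchhoff polynomial F_Γ is strictly homogeneous log-concave at every point of C^n_{T>0} = { z ∈ ℝ^n_{≥0} : z_e > 0 for all e ∈ T }. Then for every connected spanning subgraph Γ' = (V, E') with E' ⊆ E and |E'| = n−k, and for every spanning tree T' of Γ', the Kirchhoff polynomial F_{Γ'} (a polynomial in the n−k variables x_e, e ∈ E') is strictly homogeneous log-concave at every point of C^{n−k}_{T'>0} = { z ∈ ℝ^{n−k}_{≥0} : z_e > 0 for all e ∈ T' }. -/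

import Mathlib

/-!
Setting to zero the variables of the edges missing from `G'` sends the Kirchhoff polynomial of `G`
to that of `G'`, and it commutes with the partial derivatives in the remaining variables. Hence the
matrix expressing log-concavity for `G'` at `z` is a principal submatrix of the one for `G` at the
extension of `z` by zero, and principal submatrices of positive definite matrices are positive
definite. The extension by zero is admissible because a spanning tree of `G'` is also a spanning
tree of `G`.
-/

open MvPolynomial

/-- A spanning tree of a graph `G`, given as a set `T` of edges of `G` with `|V| - 1` edges
whose spanning subgraph is connected. -/
def IsSpanningTree {V : Type} [Fintype V] [DecidableEq V] (G : SimpleGraph V)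
    (T : Finset G.edgeSet) : Prop :=
  T.card = Fintype.card V - 1 ∧
    (SimpleGraph.fromEdgeSet (Subtype.val '' (T : Set G.edgeSet))).Connected

open scoped Classical in
/-- The Kirchhoff polynomial of a graph. -/
noncomputable def kirchhoff {V : Type} [Fintype V] [DecidableEq V] (G : SimpleGraph V)
    [Fintype G.edgeSet] : MvPolynomial G.edgeSet ℝ :=
  ∑ T : Finset G.edgeSet, if IsSpanningTree G T then ∏ e ∈ T, X e else 0

section KillCompl

variable {σ τ R : Type*} [CommSemiring R] {f : σ → τ} (hf : f.Injective)

lemma killCompl_X (t : τ) :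
    killCompl hf (X t : MvPolynomial τ R) = Function.extend f X 0 t := by
  by_cases ht : t ∈ Set.range f
  · obtain ⟨i, rfl⟩ := ht
    rw [hf.extend_apply, ← rename_X, killCompl_rename_app]
  · rw [Function.extend_apply' _ _ _ ht]
    simp [killCompl, ht]

lemma aeval_killCompl {S : Type*} [CommSemiring S] [Algebra R S] (z : σ → S)
    (p : MvPolynomial τ R) :
    aeval z (killCompl hf p) = aeval (Function.extend f z 0) p := by
  suffices (aeval z).comp (killCompl hf) = aeval (R := R) (Function.extend f z 0) from
    DFunLike.congr_fun this p
  ext t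
  simp [killCompl_X, Function.apply_extend (aeval z), Function.comp_def, Pi.zero_def]

lemma eval_killCompl (z : σ → R) (p : MvPolynomial τ R) :
    eval z (killCompl hf p) = eval (Function.extend f z 0) p :=
  aeval_killCompl hf z p

lemma pderiv_killCompl (i : σ) (p : MvPolynomial τ R) :
    pderiv i (killCompl hf p) = killCompl hf (pderiv (f i) p) := by
  ext m
  simp only [coeff_pderiv, coeff_killCompl, Finsupp.mapDomain_add, Finsupp.mapDomain_single,
    Finsupp.mapDomain_apply hf]

lemma killCompl_prod_X_map (f : σ ↪ τ) (S : Finset σ) :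
    killCompl f.injective (∏ t ∈ S.map f, X t : MvPolynomial τ R) = ∏ i ∈ S, X i := by
  simp only [map_prod, Finset.prod_map, killCompl_X, f.injective.extend_apply]

lemma killCompl_prod_X_eq_zero {T : Finset τ} (hT : ¬ ↑T ⊆ Set.range f) :
    killCompl hf (∏ t ∈ T, X t : MvPolynomial τ R) = 0 := by
  obtain ⟨t, htT, htf⟩ := Set.not_subset.1 hT
  rw [map_prod]
  refine Finset.prod_eq_zero htT ?_
  rw [killCompl_X, Function.extend_apply' _ _ _ htf, Pi.zero_apply]

lemma killCompl_sum_ite_prod_X [Fintype σ] [Fintype τ] (f : σ ↪ τ) (P : Finset τ → Prop)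
    [DecidablePred P] :
    killCompl f.injective (∑ T, if P T then ∏ t ∈ T, X t else 0 : MvPolynomial τ R) =
      ∑ S : Finset σ, if P (S.map f) then ∏ i ∈ S, X i else 0 := by
  rw [map_sum]
  refine (Finset.sum_of_injOn (Finset.map f) (Finset.map_injective f).injOn (by simp) ?_ ?_).symm
  · intro T _ hT
    have hTf : ¬ ↑T ⊆ Set.range f := by
      intro hsub
      have hTuniv : T ⊆ Finset.univ.map f := by simpa [← Finset.coe_subset] using hsub
      obtain ⟨S, -, rfl⟩ := Finset.subset_map_iff.1 hTuniv
      exact hT ⟨S, by simp, rfl⟩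
    rw [apply_ite (killCompl f.injective), killCompl_prod_X_eq_zero _ hTf, map_zero, ite_self]
  · intro S _
    rw [apply_ite (killCompl f.injective), killCompl_prod_X_map, map_zero]

end KillCompl

section LogConcavity

variable {σ τ R : Type*}

/-- The matrix `-p · H_p + s · (∇p)ᵀ(∇p)` at the point `a`, where `H_p` is the Hessian matrix of
`p` and `∇p` its gradient, as a row vector. -/
noncomputable def logConcavityMatrix [CommRing R] (p : MvPolynomial σ R) (a : σ → R) (s : R) :
    Matrix σ σ R :=
  Matrix.of fun i j =>
    -(eval a p) * eval a (pderiv i (pderiv j p)) + s * (eval a (pderiv i p) * eval a (pderiv j p))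

lemma logConcavityMatrix_killCompl [CommRing R] {f : σ → τ} (hf : f.Injective)
    (p : MvPolynomial τ R) (z : σ → R) (s : R) :
    logConcavityMatrix (killCompl hf p) z s =
      (logConcavityMatrix p (Function.extend f z 0) s).submatrix f f := by
  ext i j
  simp only [logConcavityMatrix, Matrix.of_apply, Matrix.submatrix_apply, pderiv_killCompl,
    eval_killCompl]

/-- Strict homogeneous log-concavity of `p` at the point `a`. The degree `r` of `p` is a parameter,
because it enters only through the threshold `(r - 1) / r`. -/
def IsStrictlyHomogLogConcaveAt (r : ℕ) (p : MvPolynomial σ ℝ) (a : σ → ℝ) : Prop :=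
  ∀ s : ℝ, ((r : ℝ) - 1) / (r : ℝ) < s → (logConcavityMatrix p a s).PosDef

lemma IsStrictlyHomogLogConcaveAt.killCompl {r : ℕ} {f : σ → τ} (hf : f.Injective)
    {p : MvPolynomial τ ℝ} {z : σ → ℝ}
    (h : IsStrictlyHomogLogConcaveAt r p (Function.extend f z 0)) :
    IsStrictlyHomogLogConcaveAt r (killCompl hf p) z := by
  intro s hs
  rw [logConcavityMatrix_killCompl]
  exact (h s hs).submatrix hf

/-- The cone `C_{T>0}` of nonnegative vectors whose coordinates in `T` are positive. -/
def coneOfPosOn [Zero R] [Preorder R] (T : Finset σ) : Set (σ → R) :=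
  {z | (∀ i, 0 ≤ z i) ∧ ∀ i ∈ T, 0 < z i}

lemma extend_mem_coneOfPosOn_map [Zero R] [Preorder R] (f : σ ↪ τ) {T : Finset σ} {z : σ → R}
    (hz : z ∈ coneOfPosOn T) : Function.extend f z 0 ∈ coneOfPosOn (T.map f) := by
  refine ⟨Function.extend_nonneg hz.1 le_rfl, Finset.forall_mem_map.2 fun i hi => ?_⟩
  rw [f.injective.extend_apply]
  exact hz.2 i hi

end LogConcavity

section Subgraph

variable {V : Type} {G G' : SimpleGraph V}

/-- The inclusion of the edges of a spanning subgraph `G'` into those of `G`. -/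
def edgeEmbedding (hle : G' ≤ G) : G'.edgeSet ↪ G.edgeSet :=
  Set.embeddingOfSubset _ _ (SimpleGraph.edgeSet_mono hle)

variable [Fintype V] [DecidableEq V]

lemma isSpanningTree_map_edgeEmbedding (hle : G' ≤ G) (T : Finset G'.edgeSet) :
    IsSpanningTree G (T.map (edgeEmbedding hle)) ↔ IsSpanningTree G' T := by
  have himage : Subtype.val '' (T.map (edgeEmbedding hle) : Set G.edgeSet) =
      Subtype.val '' (T : Set G'.edgeSet) := by
    rw [Finset.coe_map, Set.image_image]
    rfl
  rw [IsSpanningTree, IsSpanningTree, himage, Finset.card_map]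

lemma killCompl_kirchhoff [Fintype G.edgeSet] [Fintype G'.edgeSet] (hle : G' ≤ G) :
    killCompl (edgeEmbedding hle).injective (kirchhoff G) = kirchhoff G' := by
  classical
  rw [kirchhoff, killCompl_sum_ite_prod_X]
  exact Finset.sum_congr rfl fun T _ =>
    if_congr (isSpanningTree_map_edgeEmbedding hle T) rfl rfl

end Subgraph

/-- let `Γ` be a finite connected simple graph with `r + 1 ≥ 3` vertices and
`n ≥ 3` edges whose Kirchhoff polynomial is strictly homogeneous log-concave on the cone
`C^n_{T>0}` for every spanning tree `T`.  Then for every connected spanning subgraph `Γ'` (same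
vertex set, `n - k` edges) and every spanning tree `T'` of `Γ'`, the Kirchhoff polynomial of
`Γ'` is strictly homogeneous log-concave at every point of `C^{n-k}_{T'>0}`. -/
theorem subgraph_kirchhoff_strictly_homog_logConcave
    {V : Type} [Fintype V] [DecidableEq V] (G : SimpleGraph V) [Fintype G.edgeSet]
    (hconn : G.Connected) (r n k : ℕ)
    (hV : Fintype.card V = r + 1) (hr : 3 ≤ r + 1)
    (hE : Fintype.card G.edgeSet = n) (hn : 3 ≤ n)
    (hconc : ∀ T : Finset G.edgeSet, IsSpanningTree G T →
      ∀ a : G.edgeSet → ℝ, (∀ e, 0 ≤ a e) → (∀ e ∈ T, 0 < a e) →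
      ∀ s : ℝ, ((r : ℝ) - 1) / (r : ℝ) < s →
        (Matrix.of fun i j : G.edgeSet =>
          -(eval a (kirchhoff G)) * eval a (pderiv i (pderiv j (kirchhoff G)))
            + s * (eval a (pderiv i (kirchhoff G)) * eval a (pderiv j (kirchhoff G)))).PosDef)
    (G' : SimpleGraph V) [Fintype G'.edgeSet] (hle : G' ≤ G) (hconn' : G'.Connected)
    (hE' : Fintype.card G'.edgeSet = n - k) (hkn : k ≤ n)
    (T' : Finset G'.edgeSet) (hT' : IsSpanningTree G' T') :
    ∀ z : G'.edgeSet → ℝ, (∀ e, 0 ≤ z e) → (∀ e ∈ T', 0 < z e) →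
      ∀ s : ℝ, ((r : ℝ) - 1) / (r : ℝ) < s →
        (Matrix.of fun i j : G'.edgeSet =>
          -(eval z (kirchhoff G')) * eval z (pderiv i (pderiv j (kirchhoff G')))
            + s * (eval z (pderiv i (kirchhoff G')) * eval z (pderiv j (kirchhoff G')))).PosDef := by
  intro z hz hzT
  rw [← killCompl_kirchhoff hle]
  obtain ⟨hext, hextT⟩ := extend_mem_coneOfPosOn_map (edgeEmbedding hle) ⟨hz, hzT⟩
  have hT : IsSpanningTree G (T'.map (edgeEmbedding hle)) :=
    (isSpanningTree_map_edgeEmbedding hle T').2 hT'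
  have hG : IsStrictlyHomogLogConcaveAt r (kirchhoff G)
      (Function.extend (edgeEmbedding hle) z 0) := hconc _ hT _ hext hextT
  exact hG.killCompl (edgeEmbedding hle).injective
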